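/- For every integer c ≥ 1 there exist constants K and C₀, depending only on c, such that the following holds. For every finite alphabet Σ, every finite set X ⊆ Σ^c with |X| = m, and every integer s ≥ 1 with s^c ≤ (4/5)·m, the number of s-tuples (x_1,…,x_s) ∈ X^s for which there exists a key y ∈ X ∖ {x_1,…,x_s} lying in the F₂-linear span of x_1,…,x_s (i.e., y ⊕ ⊕_{i∈I} x_i = ∅ for some subset I ⊆ {1,…,s}) is at most C₀ · s^K · m^{s−1}. -/

import Mathlib

/-!
If `y = ∑ i ∈ I, x i` with `y ∉ {x i}`, then `|I|` is odd (every key has exactly one character in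
position `0`) and `|I| ≠ 1`, so `|I| = 2k - 1` with `k ≥ 2`, and `y` together with the `x i`, `i ∈ I`,
is a tuple of `2k` keys of `X` in which every position character occurs an even number of times.

*Counting cancelling tuples.* There are at most `(2k-1)‼ ^ c * m ^ k` such tuples
(`card_cancelling_le`). In each position the characters can be matched up in equal pairs, i.e. there
is a fixed-point-free involution of the index set preserving the character (a pairing). There are
`(2k-1)‼` pairings (`card_pairings`), so it suffices to show that for a fixed choice of one pairing
per position at most `m ^ k` tuples are compatible. The weighted form
`∑ x, ∏ i, w i (x i) ≤ ∏ i, √(∑ x, w i x ^ 2)`, the sum being over compatible tuples, is proved by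
induction on the number of positions, each step being one application of Cauchy–Schwarz per pair
(`sum_prod_le_of_pairing`, `sum_prod_le_of_pairings`).

*Summation.* A set `I` of size `n = 2k - 1` thus accounts for at most `m ^ (s - n) * n‼ ^ c * m ^ k`
bad tuples. For `c ≥ 2` the bounds `n‼ ^ 2 ≤ n * n !`, `(s choose n) * n ! ≤ s ^ n`, `n‼ ≤ s ^ k`
and `s ^ c ≤ m` show that all `I` of size `n` together account for at most `s ^ (2c) * m ^ (s - 1)`
(`choose_mul_bound`), and there are at most `s + 1` sizes. For `c = 1` there are no bad tuples.
-/


/-- A key `x : Fin c → A` viewed as a vector of the `F₂`-vector space indexed by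
position characters `Fin c × A`. -/
def keyVec {c : ℕ} {A : Type*} [DecidableEq A] (x : Fin c → A) : Fin c × A → ZMod 2 :=
  fun p => if x p.1 = p.2 then 1 else 0

/-! ### Pairings of an index set -/

/-- A pairing (perfect matching) of `ι`, encoded as a fixed-point-free involution. -/
def IsPairing {ι : Type*} (σ : Equiv.Perm ι) : Prop :=
  (∀ i, σ (σ i) = i) ∧ ∀ i, σ i ≠ i

theorem exists_pairing_of_even {ι : Type*} [Fintype ι] (h : Even (Fintype.card ι)) :
    ∃ σ : Equiv.Perm ι, IsPairing σ := by
  obtain ⟨k, hk⟩ := h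
  have hc : Fintype.card ι = Fintype.card (Fin k ⊕ Fin k) := by simp [hk]
  obtain e := Fintype.equivOfCardEq hc
  refine ⟨(e.trans (Equiv.sumComm _ _)).trans e.symm, fun i => by simp, fun i hi => ?_⟩
  have : Sum.swap (e i) = e i := by
    have := congrArg e hi
    simpa using this
  cases h : e i <;> simp [h] at this

theorem exists_pairing_of_even_fibers {ι A : Type*} [Fintype ι] [DecidableEq A] (f : ι → A)
    (h : ∀ a, Even (Finset.univ.filter fun i => f i = a).card) :
    ∃ σ : Equiv.Perm ι, IsPairing σ ∧ ∀ i, f (σ i) = f i := by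
  have h1 : ∀ a, ∃ σ : Equiv.Perm {i // f i = a}, IsPairing σ := fun a => by
    apply exists_pairing_of_even
    rw [Fintype.card_subtype]
    exact h a
  choose τ hτ using h1
  let g : ι → ι := fun i => τ (f i) ⟨i, rfl⟩
  have gf : ∀ i, f (g i) = f i := fun i => (τ (f i) ⟨i, rfl⟩).2
  have key : ∀ a (z : {i // f i = a}), g z = τ a z := by
    rintro a ⟨z, rfl⟩; rfl
  have gg : Function.Involutive g := fun i => by
    change g (τ (f i) ⟨i, rfl⟩ : {j // f j = f i}) = i
    rw [key, (hτ _).1]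
  refine ⟨gg.toPerm, ⟨gg, fun i hi => ?_⟩, gf⟩
  exact (hτ (f i)).2 ⟨i, rfl⟩ (Subtype.ext hi)

open scoped Nat in
/-- A set of size `2k + 2` has at most `(2k + 1)‼` pairings: they are permutations of cycle type
`2 + ⋯ + 2`, of which there are `(2k + 2)! / (2 ^ (k + 1) * (k + 1)!)`. -/
theorem card_pairings {ι : Type*} [Fintype ι] [DecidableEq ι] [DecidablePred (IsPairing (ι := ι))]
    {k : ℕ} (hk : Fintype.card ι = 2 * k + 2) :
    (Finset.univ.filter fun σ : Equiv.Perm ι => IsPairing σ).card ≤ (2 * k + 1)‼ := by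
  have hsub : (Finset.univ.filter fun σ : Equiv.Perm ι => IsPairing σ) ⊆
      Finset.univ.filter fun σ : Equiv.Perm ι => σ.cycleType = Multiset.replicate (k + 1) 2 := by
    intro σ hσ
    simp only [Finset.mem_filter, Finset.mem_univ, true_and] at hσ ⊢
    have h2 : ∀ n ∈ σ.cycleType, n = 2 := by
      have : Fact (Nat.Prime 2) := ⟨Nat.prime_two⟩
      apply Equiv.Perm.pow_prime_eq_one_iff.1
      ext i
      simp [pow_two, hσ.1]
    have h3 := Multiset.eq_replicate_card.2 h2
    have h4 := σ.sum_cycleType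
    have h5 : σ.support = Finset.univ := by
      ext i; simp [hσ.2]
    rw [h3, h5, Finset.card_univ, hk] at h4
    simp at h4
    rw [h3]; congr 1; omega
  refine (Finset.card_le_card hsub).trans ?_
  have h := Equiv.Perm.card_of_cycleType_mul_eq ι (Multiset.replicate (k + 1) 2)
  rw [if_pos ⟨by simp [hk]; omega, fun a ha => (Multiset.eq_of_mem_replicate ha).ge⟩] at h
  have h6 : (2 * k + 2)! = (2 * k + 1)‼ * (2 ^ (k + 1) * (k + 1)!) := by
    rw [Nat.factorial_eq_mul_doubleFactorial (2 * k + 1), ← Nat.doubleFactorial_two_mul, mul_comm]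
    rfl
  rw [hk, h6] at h
  have h7 : (2 * k + 2 - (Multiset.replicate (k + 1) 2).sum) = 0 := by simp; omega
  have h8 : (Multiset.replicate (k + 1) 2).toFinset = {2} := by
    ext; rw [Multiset.mem_toFinset, Multiset.mem_replicate]; simp
  rw [h7, h8, Multiset.prod_replicate, Finset.prod_singleton, Multiset.count_replicate_self,
    Nat.factorial_zero, one_mul] at h
  exact (Nat.eq_of_mul_eq_mul_right (by positivity) h).le

/-! ### Cauchy–Schwarz along pairings -/

/-- A function constant on the pairs is determined by one value per pair, so the sum factors over the
pairs; Cauchy–Schwarz bounds each factor. -/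
theorem sum_prod_le_of_pairing {ι A : Type*} [Fintype ι] [Fintype A] [DecidableEq ι]
    [DecidableEq A] {σ : Equiv.Perm ι} (hσ : IsPairing σ) (g : ι → A → ℝ) (hg : ∀ i a, 0 ≤ g i a) :
    ∑ a ∈ Finset.univ.filter (fun a : ι → A => ∀ i, a (σ i) = a i), ∏ i, g i (a i) ≤
      ∏ i, √(∑ a, g i a ^ 2) := by
  classical
  obtain ⟨r⟩ : Nonempty (LinearOrder ι) :=
    ⟨LinearOrder.lift' (Fintype.equivFin ι) (Fintype.equivFin ι).injective⟩
  -- The smaller element of each pair, in an arbitrary linear order, represents the pair.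
  let P : Type _ := {i // r.lt i (σ i)}
  have hprod : ∀ h : ι → ℝ, ∏ i, h i = ∏ i : P, (h i * h (σ i)) := by
    intro h
    rw [← Fintype.prod_subtype_mul_prod_subtype (fun i => r.lt i (σ i)), Finset.prod_mul_distrib]
    congr 1
    symm
    refine Fintype.prod_equiv (σ.subtypeEquiv fun i => ?_) _ _ fun i => rfl
    rw [hσ.1]
    exact ⟨fun h => not_lt_of_gt h, fun h => lt_of_le_of_ne (not_lt.1 h) (hσ.2 i).symm⟩
  calc _ = ∑ a ∈ Finset.univ.filter (fun a : ι → A => ∀ i, a (σ i) = a i),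
        ∏ i : P, (g i (a i) * g (σ i) (a i)) := by
        refine Finset.sum_congr rfl fun a ha => ?_
        simp only [Finset.mem_filter, Finset.mem_univ, true_and] at ha
        rw [hprod]
        exact Finset.prod_congr rfl fun i _ => by rw [ha]
    _ = ∑ b ∈ (Finset.univ.filter (fun a : ι → A => ∀ i, a (σ i) = a i)).image
          (fun a (i : P) => a i), ∏ i : P, (g i (b i) * g (σ i) (b i)) := by
        rw [Finset.sum_image]
        intro a ha a' ha' haa
        simp only [Finset.coe_filter, Finset.mem_univ, true_and, Set.mem_ofPred_eq] at ha ha'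
        have hlt : ∀ i, r.lt i (σ i) → a i = a' i := fun i hi => congrFun haa (⟨i, hi⟩ : P)
        funext i
        rcases lt_trichotomy i (σ i) with h | h | h
        · exact hlt i h
        · exact absurd h.symm (hσ.2 i)
        · rw [← ha, ← ha']
          exact hlt (σ i) (by rw [hσ.1]; exact h)
    _ ≤ ∑ b : P → A, ∏ i : P, (g i (b i) * g (σ i) (b i)) :=
        Finset.sum_le_univ_sum_of_nonneg fun b =>
          Finset.prod_nonneg fun i _ => mul_nonneg (hg _ _) (hg _ _)
    _ = ∏ i : P, ∑ a, g i a * g (σ i) a := by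
        rw [Finset.prod_univ_sum, Fintype.piFinset_univ]
    _ ≤ ∏ i : P, (√(∑ a, g i a ^ 2) * √(∑ a, g (σ i) a ^ 2)) :=
        Finset.prod_le_prod
          (fun i _ => Finset.sum_nonneg fun a _ => mul_nonneg (hg _ _) (hg _ _))
          fun i _ => Real.sum_mul_le_sqrt_mul_sqrt _ _ _
    _ = _ := (hprod fun i => √(∑ a, g i a ^ 2)).symm

/-- The equivalence splitting off the first character of each key of a tuple of keys. -/
def splitFirst (ι A : Type*) (c : ℕ) :
    (ι → A) × (ι → Fin c → A) ≃ (ι → Fin (c + 1) → A) where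
  toFun p i := Fin.cons (p.1 i) (p.2 i)
  invFun x := (fun i => x i 0, fun i => Fin.tail (x i))
  left_inv p := by simp
  right_inv x := by funext i; simp

/-- Weighted count of the tuples of keys that, for every position `j`, are constant in that position
on the pairs of `σ j`. With the first characters `a i` fixed, induction applies to the weights
`w i (a i, ·)`; the resulting `ℓ²` norms are functions of `a i` to which
`sum_prod_le_of_pairing` applies. -/
theorem sum_prod_le_of_pairings {ι A : Type*} [Fintype ι] [Fintype A] [DecidableEq ι]
    [DecidableEq A] : ∀ (c : ℕ) (σ : Fin c → Equiv.Perm ι), (∀ j, IsPairing (σ j)) →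
    ∀ w : ι → (Fin c → A) → ℝ, (∀ i x, 0 ≤ w i x) →
    ∑ x ∈ Finset.univ.filter (fun x : ι → Fin c → A => ∀ j i, x (σ j i) j = x i j),
      ∏ i, w i (x i) ≤ ∏ i, √(∑ x, w i x ^ 2) := by
  intro c
  induction c with
  | zero =>
    intro σ _ w hw
    simp [Real.sqrt_sq (hw _ _)]
  | succ c ih =>
    intro σ hσ w hw
    rw [Finset.sum_filter, ← (splitFirst ι A c).sum_comp, Fintype.sum_prod_type]
    have hr : ∀ i, ∑ x, w i x ^ 2 =
        ∑ a : A, √(∑ y : Fin c → A, w i (Fin.cons a y) ^ 2) ^ 2 := by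
      intro i
      rw [← (Fin.consEquiv fun _ : Fin (c + 1) => A).sum_comp, Fintype.sum_prod_type]
      refine Finset.sum_congr rfl fun a _ => ?_
      rw [Real.sq_sqrt (Finset.sum_nonneg fun _ _ => sq_nonneg _)]
      rfl
    simp_rw [hr]
    refine le_trans ?_ (sum_prod_le_of_pairing (hσ 0) _ fun i a => Real.sqrt_nonneg _)
    rw [Finset.sum_filter]
    refine Finset.sum_le_sum fun a _ => ?_
    split_ifs with ha
    · refine le_trans (le_of_eq ?_) (ih (fun j => σ j.succ) (fun j => hσ _)
        (fun i y => w i (Fin.cons (a i) y)) fun i y => hw _ _)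
      rw [Finset.sum_filter]
      refine Finset.sum_congr rfl fun y _ => ?_
      simp [splitFirst, Fin.forall_fin_succ, ha]
    · refine le_of_eq (Finset.sum_eq_zero fun y _ => if_neg fun h => ha fun i => ?_)
      exact h 0 i

/-! ### Numerical estimates -/

theorem double_fact_mono (n : ℕ) : Nat.doubleFactorial n ≤ Nat.doubleFactorial (n + 1) := by
  induction n using Nat.twoStepInduction with
  | zero => simp
  | one => simp
  | more n ih _ =>
    rw [Nat.doubleFactorial_add_two, Nat.doubleFactorial_add_two (n + 1)]
    gcongr; omega

theorem double_fact_le_pow (k n : ℕ) (h : 2 * k + 1 ≤ n) :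
    Nat.doubleFactorial (2 * k + 1) ≤ n ^ (k + 1) := by
  induction k with
  | zero => simp; omega
  | succ k ih =>
    rw [show 2 * (k + 1) + 1 = 2 * k + 1 + 2 by ring, Nat.doubleFactorial_add_two, pow_succ, mul_comm]
    gcongr
    · exact ih (by omega)
    · omega

open scoped Nat in
/-- The total contribution of the index sets of size `n = 2k + 3`. Two of the `c + 2` factors `n‼`
are absorbed by the binomial coefficient and the others are at most `s ^ (k + 2)`, which leaves
`s ^ (2 * (c + 2)) * (s ^ (c + 2)) ^ k`, and `s ^ (c + 2) ≤ m`. -/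
theorem choose_mul_bound {c s m k : ℕ} (hks : 2 * k + 3 ≤ s) (hm : s ^ (c + 2) ≤ m) :
    s.choose (2 * k + 3) * (m ^ (s - (2 * k + 3)) * ((2 * k + 3)‼ ^ (c + 2) * m ^ (k + 2))) ≤
      s ^ (2 * (c + 2)) * m ^ (s - 1) := by
  set D := (2 * k + 3)‼ with hD
  have h1 : D * D ≤ (2 * k + 3) * (2 * k + 3)! := by
    rw [Nat.factorial_eq_mul_doubleFactorial (2 * k + 2)]
    have : D ≤ (2 * k + 3) * (2 * k + 2)‼ := by
      rw [hD, Nat.doubleFactorial_add_two]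
      exact Nat.mul_le_mul le_rfl (double_fact_mono _)
    calc D * D ≤ D * ((2 * k + 3) * (2 * k + 2)‼) := Nat.mul_le_mul le_rfl this
      _ = _ := by rw [hD]; ring
  have h2 : D ≤ s ^ (k + 2) := double_fact_le_pow (k + 1) s hks
  have h3 : s.choose (2 * k + 3) * (2 * k + 3)! ≤ s ^ (2 * k + 3) := by
    rw [mul_comm, ← Nat.descFactorial_eq_factorial_mul_choose]
    exact Nat.descFactorial_le_pow _ _
  obtain ⟨t, rfl⟩ := Nat.exists_eq_add_of_le hks
  set s := 2 * k + 3 + t with hs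
  rw [show s - (2 * k + 3) = t by omega, show s - 1 = k + (t + (k + 2)) by omega]
  calc _ = s.choose (2 * k + 3) * (D * D) * D ^ c * m ^ (t + (k + 2)) := by ring
    _ ≤ s.choose (2 * k + 3) * ((2 * k + 3) * (2 * k + 3)!) * (s ^ (k + 2)) ^ c
        * m ^ (t + (k + 2)) := by gcongr
    _ = (2 * k + 3) * (s.choose (2 * k + 3) * (2 * k + 3)!) * (s ^ (k + 2)) ^ c
        * m ^ (t + (k + 2)) := by ring
    _ ≤ s * s ^ (2 * k + 3) * (s ^ (k + 2)) ^ c * m ^ (t + (k + 2)) := by gcongr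
    _ = s ^ (2 * (c + 2)) * (s ^ (c + 2)) ^ k * m ^ (t + (k + 2)) := by
        simp only [← pow_mul, ← pow_succ', ← pow_add]
        congr 2; ring
    _ ≤ s ^ (2 * (c + 2)) * m ^ k * m ^ (t + (k + 2)) := by gcongr
    _ = _ := by ring

/-! ### Counting cancelling and dependent tuples -/

open scoped Nat in
/-- The number of `(2k + 2)`-tuples of keys of `X` whose position characters all cancel in pairs. -/
theorem card_cancelling_le {ι A : Type*} [Fintype ι] [Fintype A] [DecidableEq ι] [DecidableEq A]
    {c k : ℕ} (hk : Fintype.card ι = 2 * k + 2) (X : Finset (Fin c → A)) :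
    ((Fintype.piFinset fun _ : ι => X).filter fun z =>
      ∀ j a, Even (Finset.univ.filter fun i => z i j = a).card).card ≤
      (2 * k + 1)‼ ^ c * X.card ^ (k + 1) := by
  classical
  have hsub : ((Fintype.piFinset fun _ : ι => X).filter fun z =>
      ∀ j a, Even (Finset.univ.filter fun i => z i j = a).card) ⊆
      (Fintype.piFinset fun _ : Fin c => Finset.univ.filter fun σ : Equiv.Perm ι =>
        IsPairing σ).biUnion fun σ =>
          (Finset.univ.filter (fun x : ι → Fin c → A => ∀ j i, x (σ j i) j = x i j)).filter
            fun x => ∀ i, x i ∈ X := by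
    intro z hz
    simp only [Finset.mem_filter, Fintype.mem_piFinset] at hz
    choose σ hσ using fun j => exists_pairing_of_even_fibers (fun i => z i j) (hz.2 j)
    simp only [Finset.mem_biUnion, Fintype.mem_piFinset, Finset.mem_filter, Finset.mem_univ,
      true_and]
    exact ⟨σ, fun j => (hσ j).1, fun j => (hσ j).2, hz.1⟩
  refine (Finset.card_le_card hsub).trans ?_
  refine (Finset.card_biUnion_le_card_mul _ _ (X.card ^ (k + 1)) fun σ hσ => ?_).trans ?_
  · -- With indicator weights, each norm `√(∑ x, w i x ^ 2)` equals `√|X|`.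
    simp only [Fintype.mem_piFinset, Finset.mem_filter, Finset.mem_univ, true_and] at hσ
    have h := sum_prod_le_of_pairings c σ hσ (fun _ x => if x ∈ X then (1 : ℝ) else 0)
      fun i x => by split_ifs <;> simp
    simp only [Finset.prod_ite_zero, Finset.mem_univ, forall_const, ite_pow, one_pow,
      Finset.prod_const_one, zero_pow two_ne_zero, Finset.sum_ite_mem, Finset.univ_inter,
      Finset.sum_const, Finset.prod_const, Finset.card_univ, hk, nsmul_eq_mul, mul_one,
      ← Finset.sum_filter] at h
    rw [show 2 * k + 2 = 2 * (k + 1) by ring, pow_mul, Real.sq_sqrt (Nat.cast_nonneg _)] at h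
    exact_mod_cast h
  · rw [Fintype.card_piFinset_const]
    gcongr
    exact card_pairings hk

theorem keyVec_injective {c : ℕ} {A : Type*} [DecidableEq A] :
    Function.Injective (keyVec : (Fin c → A) → _) := by
  intro x y h
  funext j
  have := congrFun h (j, y j)
  by_contra hne
  simp [keyVec, hne] at this

/-- If `y` is the sum of the `x i`, `i ∈ I`, then all position characters of the tuple made of `y`
(at `none`) and the `x i` (at `some i`) occur an even number of times. -/
theorem even_fibers_of_keyVec_eq_sum {c : ℕ} {A ι : Type*} [DecidableEq A] (I : Finset ι)
    (y : Fin c → A) (x : ι → Fin c → A) (h : keyVec y = ∑ i ∈ I, keyVec (x i)) (j : Fin c) (a : A) :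
    Even (Finset.univ.filter fun o : Option I => (o.elim y fun i => x i) j = a).card := by
  rw [← ZMod.natCast_eq_zero_iff_even, Finset.card_filter]
  have := congrFun h (j, a)
  rw [Finset.sum_apply, ← Finset.sum_coe_sort] at this
  rw [Fintype.sum_option]
  push_cast
  simp only [keyVec] at this
  simp only [Option.elim_none, Option.elim_some]
  refine (congrArg (· + _) this).trans ?_
  exact CharTwo.add_self_eq_zero _

theorem odd_card_of_keyVec_eq_sum {c : ℕ} {A ι : Type*} [DecidableEq A] [Fintype A] (j : Fin c)
    (I : Finset ι) (y : Fin c → A) (x : ι → Fin c → A) (h : keyVec y = ∑ i ∈ I, keyVec (x i)) :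
    Odd I.card := by
  have h1 : Even (Fintype.card (Option I)) := by
    rw [← Finset.card_univ, Finset.card_eq_sum_card_fiberwise
      (f := fun o : Option I => (o.elim y fun i => x i) j) (t := Finset.univ) (by simp)]
    exact Finset.even_sum _ fun a _ => even_fibers_of_keyVec_eq_sum I y x h j a
  rw [Fintype.card_option, Fintype.card_coe] at h1
  exact Nat.not_even_iff_odd.1 (Nat.even_add_one.1 h1)

open scoped Nat in
/-- The number of tuples for which the keys indexed by `I` sum to a key of `X`. Such a tuple is
determined by its entries outside `I` together with the cancelling tuple formed by its entries in `I`
and their sum. -/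
theorem card_dependent_le {A : Type*} [Fintype A] [DecidableEq A] {c s k : ℕ}
    (X : Finset (Fin c → A)) (I : Finset (Fin s)) (hI : I.card = 2 * k + 1)
    [DecidablePred fun x : Fin s → Fin c → A => ∃ y ∈ X, keyVec y = ∑ i ∈ I, keyVec (x i)] :
    ((Fintype.piFinset fun _ : Fin s => X).filter fun x =>
      ∃ y ∈ X, keyVec y = ∑ i ∈ I, keyVec (x i)).card ≤
      X.card ^ (s - (2 * k + 1)) * ((2 * k + 1)‼ ^ c * X.card ^ (k + 1)) := by
  classical
  have hO : Fintype.card (Option I) = 2 * k + 2 := by simp [hI]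
  have hC : Fintype.card {i // i ∉ I} = s - (2 * k + 1) := by
    rw [Fintype.card_subtype_compl]; simp [hI]
  have hP : (Fintype.piFinset fun _ : {i // i ∉ I} => X).card = X.card ^ (s - (2 * k + 1)) := by
    rw [Fintype.card_piFinset, Finset.prod_const, Finset.card_univ, hC]
  rw [← hP]
  refine le_trans ?_ (Nat.mul_le_mul le_rfl (card_cancelling_le hO X))
  rw [← Finset.card_product]
  obtain ⟨i₀, -⟩ : I.Nonempty := Finset.card_pos.1 (by omega)
  have hY : ∀ x : Fin s → Fin c → A, ∃ y, (∃ y ∈ X, keyVec y = ∑ i ∈ I, keyVec (x i)) →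
      y ∈ X ∧ keyVec y = ∑ i ∈ I, keyVec (x i) := fun x => by
    by_cases h : ∃ y ∈ X, keyVec y = ∑ i ∈ I, keyVec (x i)
    · obtain ⟨y, hy⟩ := h
      exact ⟨y, fun _ => hy⟩
    · exact ⟨x i₀, fun h' => absurd h' h⟩
  choose Y hY using hY
  refine Finset.card_le_card_of_injOn
    (fun x => ((fun i : {i // i ∉ I} => x i), fun o : Option I => o.elim (Y x) fun i => x i))
    ?_ ?_
  · intro x hx
    simp only [Finset.coe_filter, Fintype.mem_piFinset, Set.mem_ofPred_eq] at hx
    have hyx := hY x hx.2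
    simp only [Finset.coe_product, Set.mem_prod, Finset.mem_coe, Fintype.mem_piFinset,
      Finset.mem_filter]
    refine ⟨fun i => hx.1 _, fun o => ?_, even_fibers_of_keyVec_eq_sum I (Y x) x hyx.2⟩
    cases o
    · exact hyx.1
    · exact hx.1 _
  · intro x _ x' _ h
    simp only [Prod.mk.injEq] at h
    funext i
    by_cases hi : i ∈ I
    · exact congrFun h.2 (some ⟨i, hi⟩)
    · exact congrFun h.1 ⟨i, hi⟩

/-- The bound for at least two positions, written `c + 2`: the bad tuples are covered by the index sets
`I` of odd size at least `3`, which are grouped by size. -/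
theorem card_bad_le {A : Type*} [Fintype A] [DecidableEq A] {c s : ℕ} (X : Finset (Fin (c + 2) → A))
    (hm : s ^ (c + 2) ≤ X.card) (S : Finset (Fin s → Fin (c + 2) → A))
    (hS : ∀ x ∈ S, (∀ i, x i ∈ X) ∧ ∃ y ∈ X, (∀ i, y ≠ x i) ∧
      ∃ I : Finset (Fin s), keyVec y = ∑ i ∈ I, keyVec (x i)) :
    S.card ≤ (s + 1) * (s ^ (2 * (c + 2)) * X.card ^ (s - 1)) := by
  classical
  let B : Finset (Fin s) → Finset (Fin s → Fin (c + 2) → A) := fun I =>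
    (Fintype.piFinset fun _ : Fin s => X).filter fun x =>
      ∃ y ∈ X, keyVec y = ∑ i ∈ I, keyVec (x i)
  let Q : ℕ → Prop := fun n => ∃ k, n = 2 * k + 3
  let F : ℕ → ℕ := fun n =>
    X.card ^ (s - n) * (Nat.doubleFactorial n ^ (c + 2) * X.card ^ ((n + 1) / 2))
  have hsub : S ⊆ (Finset.univ.filter fun I : Finset (Fin s) => Q I.card).biUnion B := by
    intro x hx
    obtain ⟨hxX, y, hyX, hyx, I, hI⟩ := hS x hx
    simp only [Finset.mem_biUnion, Finset.mem_filter, Finset.mem_univ, true_and, B,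
      Fintype.mem_piFinset]
    refine ⟨I, ?_, hxX, y, hyX, hI⟩
    obtain ⟨k, hk⟩ := odd_card_of_keyVec_eq_sum 0 I y x hI
    rcases k with _ | k
    · -- A single summand would force `y` to be one of the `x i`
      obtain ⟨i, rfl⟩ := Finset.card_eq_one.1 (hk.trans (by norm_num))
      rw [Finset.sum_singleton] at hI
      exact absurd (keyVec_injective hI) (hyx i)
    · exact ⟨k, by omega⟩
  calc S.card ≤ ∑ I ∈ Finset.univ.filter (fun I : Finset (Fin s) => Q I.card), (B I).card :=
        (Finset.card_le_card hsub).trans Finset.card_biUnion_le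
    _ ≤ ∑ I ∈ Finset.univ.filter (fun I : Finset (Fin s) => Q I.card), F I.card := by
        refine Finset.sum_le_sum fun I hI => ?_
        obtain ⟨k, hk⟩ := (Finset.mem_filter.1 hI).2
        have := card_dependent_le (k := k + 1) X I (by omega)
        refine this.trans (le_of_eq ?_)
        simp only [F, hk]
        rw [show (2 * k + 3 + 1) / 2 = k + 1 + 1 by omega,
          show 2 * (k + 1) + 1 = 2 * k + 3 by ring]
    _ = ∑ n ∈ Finset.range (s + 1), s.choose n * (if Q n then F n else 0) := by
        rw [Finset.sum_filter, ← Finset.powerset_univ,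
          Finset.sum_powerset_apply_card (fun n => if Q n then F n else 0)]
        simp
    _ ≤ ∑ n ∈ Finset.range (s + 1), s ^ (2 * (c + 2)) * X.card ^ (s - 1) := by
        refine Finset.sum_le_sum fun n hn => ?_
        split_ifs with h
        · obtain ⟨k, rfl⟩ := h
          have := choose_mul_bound (k := k) (Finset.mem_range_succ_iff.1 hn) hm
          simp only [F]
          rwa [show (2 * k + 3 + 1) / 2 = k + 2 by omega]
        · simp
    _ = _ := by simp

theorem stmt10 (c : ℕ) (hc : 1 ≤ c) :
    ∃ K C₀ : ℝ, ∀ (A : Type) [Fintype A] [DecidableEq A],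
      ∀ (X : Finset (Fin c → A)) (s : ℕ), 1 ≤ s → ((s : ℝ) ^ c ≤ (4 / 5) * X.card) →
      (Nat.card {x : Fin s → Fin c → A // (∀ i, x i ∈ X) ∧
          ∃ y ∈ X, (∀ i, y ≠ x i) ∧
            ∃ I : Finset (Fin s), keyVec y = ∑ i ∈ I, keyVec (x i)} : ℝ) ≤
        C₀ * (s : ℝ) ^ K * (X.card : ℝ) ^ (s - 1) := by
  classical
  obtain ⟨c, rfl⟩ | rfl : (∃ d, c = d + 2) ∨ c = 1 := by
    rcases c with _ | _ | c
    · omega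
    · exact Or.inr rfl
    · exact Or.inl ⟨c, rfl⟩
  · refine ⟨(2 * (c + 2) + 1 : ℕ), 2, fun A _ _ X s hs hm => ?_⟩
    have hm' : s ^ (c + 2) ≤ X.card := by
      have : (s : ℝ) ^ (c + 2) ≤ X.card := hm.trans (by
        have : (0 : ℝ) ≤ X.card := Nat.cast_nonneg _
        linarith)
      exact_mod_cast this
    rw [Nat.card_eq_fintype_card, Fintype.card_subtype, Real.rpow_natCast]
    have h := card_bad_le X hm' (Finset.univ.filter fun x : Fin s → Fin (c + 2) → A =>
      (∀ i, x i ∈ X) ∧ ∃ y ∈ X, (∀ i, y ≠ x i) ∧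
        ∃ I : Finset (Fin s), keyVec y = ∑ i ∈ I, keyVec (x i)) fun x hx => by simpa using hx
    have h2 := h.trans (Nat.mul_le_mul_right _ (show s + 1 ≤ 2 * s by omega))
    rw [show 2 * s * (s ^ (2 * (c + 2)) * X.card ^ (s - 1)) =
      2 * s ^ (2 * (c + 2) + 1) * X.card ^ (s - 1) by ring] at h2
    exact_mod_cast h2
  · -- For `c = 1` a key sharing its only character with some `x i` equals `x i`
    refine ⟨0, 0, fun A _ _ X s hs hm => ?_⟩
    have : IsEmpty {x : Fin s → Fin 1 → A // (∀ i, x i ∈ X) ∧ ∃ y ∈ X, (∀ i, y ≠ x i) ∧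
        ∃ I : Finset (Fin s), keyVec y = ∑ i ∈ I, keyVec (x i)} := by
      refine ⟨fun ⟨x, _, y, _, hyx, I, hI⟩ => ?_⟩
      have h := congrFun hI (0, y 0)
      rw [Finset.sum_apply, Finset.sum_eq_zero] at h
      · simp [keyVec] at h
      · intro i _
        refine if_neg fun hi => hyx i ?_
        funext j
        rw [Subsingleton.elim j 0]
        exact hi.symm
    simp
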